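/- Let p be any prime and F = ℚ(√p) with fundamental unit ε. Then the fundamental unit ε is not a sum of two squares in the ring of integers O_F. -/

import Mathlib

namespace FU

lemma irr (p : ℕ) (hp : p.Prime) {A B : ℚ} (h : (A : ℝ) + B * Real.sqrt p = 0) : A = 0 ∧ B = 0 := by
  have hi : Irrational (Real.sqrt p) := hp.irrational_sqrt
  have hB : B = 0 := by
    by_contra hB
    have hB' : (B : ℝ) ≠ 0 := by exact_mod_cast hB
    apply hi
    refine ⟨-A / B, ?_⟩
    push_cast
    field_simp
    linarith
  subst hB
  simp at h
  exact ⟨h, rfl⟩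

lemma sq_sqrt (p : ℕ) : Real.sqrt p * Real.sqrt p = p := Real.mul_self_sqrt (by positivity)

lemma mem_form (p : ℕ) (hp : p.Prime) {z : ℝ} (hz : z ∈ IntermediateField.adjoin ℚ {Real.sqrt p}) :
    ∃ r s : ℚ, z = r + s * Real.sqrt p := by
  have hs := sq_sqrt p
  induction hz using IntermediateField.adjoin_induction with
  | mem x hx => 
    rw [Set.mem_singleton_iff] at hx
    exact ⟨0, 1, by simp [hx]⟩
  | algebraMap x => exact ⟨x, 0, by simp⟩
  | add x y _ _ hx hy =>
    obtain ⟨a, b, rfl⟩ := hx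
    obtain ⟨c, d, rfl⟩ := hy
    exact ⟨a + c, b + d, by push_cast; ring⟩
  | mul x y _ _ hx hy =>
    obtain ⟨a, b, rfl⟩ := hx
    obtain ⟨c, d, rfl⟩ := hy
    exact ⟨a * c + b * d * p, a * d + b * c, by push_cast; linear_combination (b * d : ℝ) * hs⟩
  | inv x _ hx =>
    obtain ⟨a, b, rfl⟩ := hx
    by_cases h0 : (a : ℝ) + b * Real.sqrt p = 0
    · exact ⟨0, 0, by simp [h0]⟩
    · have h1 : (a : ℝ) - b * Real.sqrt p ≠ 0 := by
        intro h
        have := irr p hp (A := a) (B := -b) (by push_cast; linarith)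
        apply h0
        have hb : b = 0 := by linarith [this.2]
        simp [this.1, hb]
      have h2 : ((a : ℝ) ^ 2 - p * b ^ 2) ≠ 0 := by
        have := mul_ne_zero h0 h1
        intro h
        apply this
        linear_combination h - (b : ℝ) ^ 2 * hs
      refine ⟨a / (a ^ 2 - p * b ^ 2), -b / (a ^ 2 - p * b ^ 2), ?_⟩
      push_cast
      rw [inv_eq_iff_eq_inv, eq_comm, inv_eq_iff_eq_inv, eq_comm]
      apply inv_eq_of_mul_eq_one_right
      have e : (a : ℝ) / (a ^ 2 - p * b ^ 2) + -b / (a ^ 2 - p * b ^ 2) * Real.sqrt p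
          = (a - b * Real.sqrt p) / (a ^ 2 - p * b ^ 2) := by ring
      rw [e, mul_div_assoc', div_eq_one_iff_eq h2]
      linear_combination - (b : ℝ) ^ 2 * hs

lemma conj_poly (p : ℕ) (r s : ℚ) (P : Polynomial ℤ) : ∃ A B : ℚ,
    Polynomial.aeval ((r : ℝ) + s * Real.sqrt p) P = A + B * Real.sqrt p ∧
    Polynomial.aeval ((r : ℝ) - s * Real.sqrt p) P = A - B * Real.sqrt p := by
  have hs := sq_sqrt p
  induction P using Polynomial.induction_on with
  | C a => exact ⟨a, 0, by simp, by simp⟩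
  | add f g hf hg =>
    obtain ⟨A, B, h1, h2⟩ := hf
    obtain ⟨C, D, h3, h4⟩ := hg
    refine ⟨A + C, B + D, ?_, ?_⟩
    · rw [map_add, h1, h3]; push_cast; ring
    · rw [map_add, h2, h4]; push_cast; ring
  | monomial n a h =>
    obtain ⟨A, B, h1, h2⟩ := h
    refine ⟨A * r + B * s * p, A * s + B * r, ?_, ?_⟩
    · rw [pow_succ, ← mul_assoc, map_mul, h1, Polynomial.aeval_X]; push_cast
      linear_combination (B * s : ℝ) * hs
    · rw [pow_succ, ← mul_assoc, map_mul, h2, Polynomial.aeval_X]; push_cast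
      linear_combination (B * s : ℝ) * hs

lemma conj_int (p : ℕ) (hp : p.Prime) (r s : ℚ) (h : IsIntegral ℤ ((r : ℝ) + s * Real.sqrt p)) :
    IsIntegral ℤ ((r : ℝ) - s * Real.sqrt p) := by
  obtain ⟨P, hm, h0⟩ := h
  refine ⟨P, hm, ?_⟩
  obtain ⟨A, B, h1, h2⟩ := conj_poly p r s P
  rw [← Polynomial.aeval_def] at h0 ⊢
  rw [h0] at h1
  obtain ⟨hA, hB⟩ := irr p hp h1.symm
  rw [h2, hA, hB]; simp

lemma rat_int {q : ℚ} (h : IsIntegral ℤ (q : ℝ)) : ∃ n : ℤ, q = n := by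
  have h' : IsIntegral ℤ q := by
    have : (q : ℝ) = algebraMap ℚ ℝ q := rfl
    rw [this] at h
    exact (isIntegral_algebraMap_iff (algebraMap ℚ ℝ).injective).1 h
  obtain ⟨n, hn⟩ := IsIntegrallyClosed.isIntegral_iff.1 h'
  exact ⟨n, by simpa using hn.symm⟩

lemma int_form (p : ℕ) (hp : p.Prime) {z : ℝ} (hz : z ∈ IntermediateField.adjoin ℚ {Real.sqrt p})
    (hi : IsIntegral ℤ z) : ∃ a b N : ℤ, 2 * z = a + b * Real.sqrt p ∧ a ^ 2 - p * b ^ 2 = 4 * N := by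
  have hs := sq_sqrt p
  obtain ⟨r, s, rfl⟩ := mem_form p hp hz
  have hc := conj_int p hp r s hi
  obtain ⟨a, ha⟩ := rat_int (q := 2 * r) (by
    have := hi.add hc
    have e : ((2 * r : ℚ) : ℝ) = r + s * Real.sqrt p + (r - s * Real.sqrt p) := by
      push_cast; ring
    rw [e]; exact this)
  obtain ⟨N, hN⟩ := rat_int (q := r ^ 2 - p * s ^ 2) (by
    have := hi.mul hc
    have e : ((r ^ 2 - p * s ^ 2 : ℚ) : ℝ) = (r + s * Real.sqrt p) * (r - s * Real.sqrt p) := by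
      push_cast; linear_combination (s : ℝ) ^ 2 * hs
    rw [e]; exact this)
  -- p (2s)^2 integer
  have hk : (p : ℚ) * (2 * s) ^ 2 = ((a ^ 2 - 4 * N : ℤ) : ℚ) := by
    push_cast; rw [← ha, ← hN]; ring
  have h2 : ∃ m : ℤ, (p : ℚ) * (2 * s) = m := by
    have : IsIntegral ℤ ((p : ℚ) * (2 * s)) := by
      apply IsIntegral.of_pow (n := 2) (by norm_num)
      have : ((p : ℚ) * (2 * s)) ^ 2 = ((p * (a ^ 2 - 4 * N) : ℤ) : ℚ) := by
        rw [Int.cast_mul, ← hk]; push_cast; ring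
      rw [this]
      exact isIntegral_algebraMap (R := ℤ) (A := ℚ)
    obtain ⟨m, hm⟩ := IsIntegrallyClosed.isIntegral_iff.1 this
    exact ⟨m, by simpa using hm.symm⟩
  obtain ⟨m, hm⟩ := h2
  have hp0 : (p : ℚ) ≠ 0 := by exact_mod_cast hp.ne_zero
  have h3 : m ^ 2 = p * (a ^ 2 - 4 * N) := by
    have : ((m ^ 2 : ℤ) : ℚ) = ((p * (a ^ 2 - 4 * N) : ℤ) : ℚ) := by
      rw [Int.cast_mul, ← hk]; push_cast; rw [← hm]; ring
    exact_mod_cast this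
  have hpi : Prime (p : ℤ) := Nat.prime_iff_prime_int.1 hp
  obtain ⟨b, rfl⟩ := hpi.dvd_of_dvd_pow (⟨_, h3⟩ : (p : ℤ) ∣ m ^ 2)
  have hb : 2 * s = b := by
    push_cast at hm
    exact mul_left_cancel₀ hp0 hm
  refine ⟨a, b, N, ?_, ?_⟩
  · have ha' : (2 * r : ℝ) = a := by exact_mod_cast ha
    have hb' : (2 * s : ℝ) = b := by exact_mod_cast hb
    rw [← ha', ← hb']; ring
  · have : ((a ^ 2 - p * b ^ 2 : ℤ) : ℚ) = ((4 * N : ℤ) : ℚ) := by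
      push_cast; rw [← ha, ← hb, ← hN]; ring
    exact_mod_cast this

lemma cop (p : ℕ) (hp : p.Prime) {A B c : ℤ} (h : IsCoprime A B) (hB : 0 < B) (he : A * B = p * c ^ 2) :
    ∃ k : ℤ, B = k ^ 2 ∨ B = p * k ^ 2 := by
  have hpi : Prime (p : ℤ) := Nat.prime_iff_prime_int.1 hp
  have hp0 : (0 : ℤ) < p := by exact_mod_cast hp.pos
  rcases hpi.dvd_or_dvd (⟨_, he⟩ : (p : ℤ) ∣ A * B) with ⟨D, rfl⟩ | ⟨D, rfl⟩
  · have h1 : B * D = c ^ 2 := by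
      apply mul_left_cancel₀ hp0.ne'; linarith
    obtain ⟨k, hk | hk⟩ := Int.sq_of_isCoprime (h.symm.of_mul_right_right) h1
    · exact ⟨k, .inl hk⟩
    · nlinarith [sq_nonneg k]
  · have h1 : D * A = c ^ 2 := by
      apply mul_left_cancel₀ hp0.ne'; linarith
    have hD : 0 < D := by
      by_contra hD
      nlinarith
    obtain ⟨k, hk | hk⟩ := Int.sq_of_isCoprime (h.symm.of_mul_left_right) h1
    · exact ⟨k, .inr (by rw [hk])⟩
    · nlinarith [sq_nonneg k]

lemma arith (p : ℕ) (hp : p.Prime) {t u : ℤ} (ht : 0 < t + 2) (h : t ^ 2 - p * u ^ 2 = 4)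
    (hu : p % 4 = 3 → 4 ∣ u) : ∃ k : ℤ, t + 2 = k ^ 2 ∨ t + 2 = p * k ^ 2 := by
  have h4 : ¬ (4 : ℤ) ∣ p := by
    intro h
    have h' : 4 ∣ p := by exact_mod_cast h
    have := (Nat.prime_dvd_prime_iff_eq Nat.prime_two hp).1 (dvd_trans (by norm_num) h')
    subst this
    norm_num at h'
  have key : ∀ v w : ℤ, 4 * w = p * v ^ 2 → Even v := by
    intro v w hvw
    by_contra hv
    rw [Int.not_even_iff_odd] at hv
    obtain ⟨j, rfl⟩ := hv
    exact h4 ⟨w - p * (j ^ 2 + j), by linear_combination -hvw⟩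
  rcases Int.even_or_odd' t with ⟨T, rfl | rfl⟩
  · obtain ⟨U, rfl⟩ := key u (T ^ 2 - 1) (by linarith)
    have h1 : T ^ 2 - p * U ^ 2 = 1 := by linarith
    rcases Int.even_or_odd' T with ⟨s, rfl | rfl⟩
    · exfalso
      rcases Int.even_or_odd' U with ⟨V, rfl | rfl⟩
      · have : 2 * (2 * s ^ 2 - 2 * p * V ^ 2) = 1 := by linarith
        omega
      · have h5 : 4 * (s ^ 2 - p * (V ^ 2 + V)) = 1 + (p : ℤ) := by linarith
        have := hu (by omega)
        omega
    · obtain ⟨V, rfl⟩ := key U (s ^ 2 + s) (by linarith)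
      have h5 : s * (s + 1) = p * V ^ 2 := by linarith
      obtain ⟨k, hk⟩ := cop p hp (A := s) (B := s + 1) ⟨-1, 1, by ring⟩ (by linarith) h5
      exact ⟨2 * k, hk.imp (fun h => by linarith) (fun h => by linarith)⟩
  · refine cop p hp (A := 2 * T + 1 - 2) (B := 2 * T + 1 + 2) (c := u) ?_ ht (by linarith)
    -- (2T-1, 2T+3)
    have h2 : IsCoprime (2 * T - 1) (2 : ℤ) := ⟨-1, T, by ring⟩
    have h3 : IsCoprime (2 * T - 1) (2 * 2 : ℤ) := h2.mul_right h2
    have h5 := (IsCoprime.add_mul_left_right_iff (z := 1)).2 h3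
    have e1 : 2 * T + 1 - 2 = 2 * T - 1 := by ring
    have e2 : 2 * T + 1 + 2 = 2 * 2 + (2 * T - 1) * 1 := by ring
    rw [e1, e2]
    exact h5

end FU

open FU in
theorem fundamental_unit_not_sum_two_squares (p : ℕ) (hp : p.Prime) (ε : ℝ)
    (hεF : ε ∈ IntermediateField.adjoin ℚ {Real.sqrt p})
    (hεint : IsIntegral ℤ ε)
    (hfund : ∀ u : ℝ, u ∈ IntermediateField.adjoin ℚ {Real.sqrt p} →
      IsIntegral ℤ u → u ≠ 0 → IsIntegral ℤ u⁻¹ →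
      ∃ n : ℤ, u = ε ^ n ∨ u = -ε ^ n) :
    ¬ ∃ x y : ℝ, x ∈ IntermediateField.adjoin ℚ {Real.sqrt p} ∧
      y ∈ IntermediateField.adjoin ℚ {Real.sqrt p} ∧
      IsIntegral ℤ x ∧ IsIntegral ℤ y ∧ x ^ 2 + y ^ 2 = ε := by
  rintro ⟨x, y, hxF, hyF, hx, hy, hxy⟩
  have hs := sq_sqrt p
  have hsF : Real.sqrt p ∈ IntermediateField.adjoin ℚ {Real.sqrt (p : ℝ)} :=
    IntermediateField.mem_adjoin_simple_self ℚ _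
  have hp0 : (0 : ℤ) < p := by exact_mod_cast hp.pos
  have hsi : IsIntegral ℤ (Real.sqrt p) := by
    apply IsIntegral.of_pow (n := 2) (by norm_num)
    rw [sq, hs]
    exact_mod_cast isIntegral_algebraMap (R := ℤ) (A := ℝ) (x := (p : ℤ))
  have hZi : ∀ a : ℤ, IsIntegral ℤ (a : ℝ) := fun a => isIntegral_algebraMap (R := ℤ) (A := ℝ) (x := a)
  have hZF : ∀ a : ℤ, (a : ℝ) ∈ IntermediateField.adjoin ℚ {Real.sqrt (p : ℝ)} :=
    fun a => intCast_mem _ a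
  -- Pell unit
  have hnsq : ¬ IsSquare (p : ℤ) := (Nat.prime_iff_prime_int.1 hp).not_isSquare
  obtain ⟨a, b, hab, hb⟩ := Pell.exists_of_not_isSquare hp0 hnsq
  have habR : (a : ℝ) ^ 2 - p * b ^ 2 = 1 := by exact_mod_cast hab
  have hvv : ((a : ℝ) + b * Real.sqrt p) * (a - b * Real.sqrt p) = 1 := by
    linear_combination habR - (b : ℝ) ^ 2 * hs
  have hv0 : (a : ℝ) + b * Real.sqrt p ≠ 0 := left_ne_zero_of_mul_eq_one hvv
  have hvinv : ((a : ℝ) + b * Real.sqrt p)⁻¹ = a - b * Real.sqrt p := inv_eq_of_mul_eq_one_right hvv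
  have hvi : IsIntegral ℤ ((a : ℝ) + b * Real.sqrt p) := (hZi a).add ((hZi b).mul hsi)
  have hvi' : IsIntegral ℤ ((a : ℝ) + b * Real.sqrt p)⁻¹ := by
    rw [hvinv]; exact (hZi a).sub ((hZi b).mul hsi)
  obtain ⟨n, hn⟩ := hfund _ (add_mem (hZF a) (mul_mem (hZF b) hsF)) hvi hv0 hvi'
  have hvrat : ∀ c : ℤ, (a : ℝ) + b * Real.sqrt p ≠ c := by
    intro c hc
    have := irr p hp (A := a - c) (B := b) (by push_cast; linarith)
    exact hb (by exact_mod_cast this.2)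
  have hn0 : n ≠ 0 := by
    rintro rfl
    rcases hn with hn | hn
    · exact hvrat 1 (by simpa using hn)
    · exact hvrat (-1) (by simpa using hn)
  have hε0 : ε ≠ 0 := by
    rintro rfl
    rw [zero_zpow n hn0] at hn
    simp [hv0] at hn
  have hε1 : ε ≠ 1 := by
    rintro rfl
    rw [one_zpow] at hn
    rcases hn with hn | hn
    · exact hvrat 1 (by simpa using hn)
    · exact hvrat (-1) (by simpa using hn)
  have hεpos : 0 < ε := lt_of_le_of_ne (by rw [← hxy]; positivity) hε0.symm
  have hεinv : IsIntegral ℤ ε⁻¹ := by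
    have h1 : IsIntegral ℤ (ε ^ n) ∧ IsIntegral ℤ (ε ^ n)⁻¹ := by
      rcases hn with hn | hn
      · rw [← hn]; exact ⟨hvi, hvi'⟩
      · have : ε ^ n = -((a : ℝ) + b * Real.sqrt p) := by linarith
        rw [this, inv_neg]
        exact ⟨hvi.neg, hvi'.neg⟩
    apply IsIntegral.of_pow (n := n.natAbs) (by omega)
    rcases Int.natAbs_eq n with h | h
    · have h2 := h1.2
      rw [h, zpow_natCast, ← inv_pow] at h2
      exact h2
    · have h2 := h1.1
      rw [h, zpow_neg, zpow_natCast, ← inv_pow] at h2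
      exact h2
  -- no square root
  have nosq : ∀ η : ℝ, η ∈ IntermediateField.adjoin ℚ {Real.sqrt (p : ℝ)} → η ^ 2 ≠ ε := by
    intro η hη h
    have hi : IsIntegral ℤ η := by
      apply IsIntegral.of_pow (n := 2) (by norm_num); rwa [h]
    have hi' : IsIntegral ℤ η⁻¹ := by
      apply IsIntegral.of_pow (n := 2) (by norm_num); rwa [inv_pow, h]
    obtain ⟨k, hk⟩ := hfund η hη hi (by rintro rfl; apply hε0; rw [← h]; norm_num) hi'
    have h2 : ε ^ (k * 2) = ε ^ (1 : ℤ) := by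
      rw [zpow_mul, zpow_one]
      conv_rhs => rw [← h]
      rcases hk with hk | hk <;> rw [hk]
      · norm_cast
      · rw [neg_sq]; norm_cast
    have := zpow_right_injective₀ hεpos hε1 h2
    omega
  obtain ⟨t, u, N, htu, hN⟩ := int_form p hp hεF hεint
  obtain ⟨t', u', N', htu', hN'⟩ := int_form p hp (inv_mem hεF) hεinv
  obtain ⟨a1, b1, N1, hx1, hN1⟩ := int_form p hp hxF hx
  obtain ⟨a2, b2, N2, hy1, hN2⟩ := int_form p hp hyF hy
  have hrel : 2 * t = a1 ^ 2 + p * b1 ^ 2 + a2 ^ 2 + p * b2 ^ 2 ∧ u = a1 * b1 + a2 * b2 := by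
    have := irr p hp (A := 2 * t - (a1 ^ 2 + p * b1 ^ 2 + a2 ^ 2 + p * b2 ^ 2))
      (B := 2 * (u - (a1 * b1 + a2 * b2))) (by
        push_cast
        have e1 : (2 * x) ^ 2 + (2 * y) ^ 2 = 2 * (2 * ε) := by rw [← hxy]; ring
        rw [hx1, hy1, htu] at e1
        linear_combination -e1 + ((b1 : ℝ) ^ 2 + b2 ^ 2) * hs)
    have h1 : 2 * t - (a1 ^ 2 + p * b1 ^ 2 + a2 ^ 2 + p * b2 ^ 2) = 0 := by exact_mod_cast this.1
    have h2 : 2 * (u - (a1 * b1 + a2 * b2)) = 0 := by exact_mod_cast this.2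
    constructor <;> linarith
  have ht0 : 0 ≤ t := by
    have : 0 ≤ 2 * t := by rw [hrel.1]; positivity
    linarith
  have hNN : N * N' = 1 := by
    have e : (2 * ε) * (2 * ε⁻¹) = 4 := by field_simp; norm_num
    rw [htu, htu'] at e
    have := irr p hp (A := t * t' + p * u * u' - 4) (B := t * u' + u * t') (by
      push_cast; linear_combination e - (u * u' : ℝ) * hs)
    have h1 : t * t' + p * u * u' - 4 = 0 := by exact_mod_cast this.1
    have h2 : t * u' + u * t' = 0 := by exact_mod_cast this.2
    have : (4 * N) * (4 * N') = 16 := by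
      rw [← hN, ← hN']
      linear_combination (t * t' + p * u * u' + 4) * h1 - p * (t * u' + u * t') * h2
    linarith
  -- conjugate nonnegative
  have hconj : 0 ≤ (t : ℝ) - u * Real.sqrt p := by
    have : 2 * ((t : ℝ) - u * Real.sqrt p) = (a1 - b1 * Real.sqrt p) ^ 2 + (a2 - b2 * Real.sqrt p) ^ 2 := by
      have e1 : (2 * t : ℝ) = a1 ^ 2 + p * b1 ^ 2 + a2 ^ 2 + p * b2 ^ 2 := by exact_mod_cast hrel.1
      have e2 : (u : ℝ) = a1 * b1 + a2 * b2 := by exact_mod_cast hrel.2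
      linear_combination e1 - 2 * Real.sqrt p * e2 - ((b1 : ℝ) ^ 2 + b2 ^ 2) * hs
    nlinarith [sq_nonneg (a1 - b1 * Real.sqrt p), sq_nonneg (a2 - b2 * Real.sqrt p)]
  have hN1' : N = 1 := by
    rcases Int.eq_one_or_neg_one_of_mul_eq_one hNN with h | h
    · exact h
    · exfalso
      rw [h] at hN
      have hR : (t : ℝ) ^ 2 - p * u ^ 2 = 4 * (-1) := by exact_mod_cast hN
      have := mul_nonneg (by linarith : 0 ≤ (t : ℝ) + u * Real.sqrt p) hconj
      nlinarith
  rw [hN1'] at hN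
  have ev : p % 4 = 3 → ∀ a b N : ℤ, a ^ 2 - p * b ^ 2 = 4 * N → 2 ∣ a ∧ 2 ∣ b := by
    intro h3 a b N h
    obtain ⟨q, hq⟩ : ∃ q : ℤ, (p : ℤ) = 4 * q + 3 := ⟨p / 4, by omega⟩
    rw [hq] at h
    rcases Int.even_or_odd' a with ⟨c, rfl | rfl⟩ <;> rcases Int.even_or_odd' b with ⟨d, rfl | rfl⟩
    · simp
    · exfalso; ring_nf at h; omega
    · exfalso; ring_nf at h; omega
    · exfalso; ring_nf at h; omega
  obtain ⟨k, hk⟩ := arith p hp (t := t) (u := u) (by linarith) (by linarith) (by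
    intro h3
    rw [hrel.2]
    obtain ⟨⟨c1, rfl⟩, ⟨d1, rfl⟩⟩ := ev h3 _ _ _ hN1
    obtain ⟨⟨c2, rfl⟩, ⟨d2, rfl⟩⟩ := ev h3 _ _ _ hN2
    exact ⟨c1 * d1 + c2 * d2, by ring⟩)
  have hk0 : (k : ℝ) ≠ 0 := by
    intro h
    have : k = 0 := by exact_mod_cast h
    subst this
    rcases hk with hk | hk <;> simp at hk <;> omega
  have hm : ε * (t + 2) = (1 + ε) ^ 2 := by
    have hR : (t : ℝ) ^ 2 - p * u ^ 2 = 4 := by exact_mod_cast hN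
    have e : ε = (t + u * Real.sqrt p) / 2 := by linarith
    rw [e]
    linear_combination hR / 4 - (u : ℝ) ^ 2 / 4 * hs
  have h1F : 1 + ε ∈ IntermediateField.adjoin ℚ {Real.sqrt (p : ℝ)} := add_mem (one_mem _) hεF
  rcases hk with hk | hk
  · have hkR : (t + 2 : ℝ) = k ^ 2 := by exact_mod_cast hk
    apply nosq ((1 + ε) / k) (div_mem h1F (hZF k))
    rw [div_pow, ← hm, hkR]
    field_simp
  · have hkR : (t + 2 : ℝ) = p * k ^ 2 := by exact_mod_cast hk
    have hpR : (p : ℝ) ≠ 0 := by exact_mod_cast hp.ne_zero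
    apply nosq ((1 + ε) / (k * Real.sqrt p)) (div_mem h1F (mul_mem (hZF k) hsF))
    rw [div_pow, ← hm, hkR, mul_pow, sq (Real.sqrt p), hs]
    field_simp
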